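/- arXiv:1305.1885 — 3 statements merged into one kernel-verified Lean document; each statement's English description precedes it below -/
import Mathlib

section
/- Let G be a finite simple graph, let B be any real matrix whose columns are indexed by the vertices of G and which satisfies BᵀB = L(G), and let S be an independent set of vertices of G each of which has at least one neighbor in G. Then the columns of B indexed by the vertices in S are linearly independent; equivalently, the submatrix of B formed by these columns has full column rank. -/
open Matrix

section RowIndependence

variable {R m n : Type*} [Semiring R] [DecidableEq m]

theorem vecMul_diagonal_injective [Fintype m] {d : m → R} (hd : ∀ i, IsRightRegular (d i)) :
    Function.Injective (fun x : m → R => x ᵥ* diagonal d) := fun x y hxy =>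
  funext fun i => hd i <| by simpa only [vecMul_diagonal] using congrFun hxy i

theorem linearIndependent_row_of_mul_eq_diagonal [Finite m] [Fintype n] {A : Matrix m n R}
    {C : Matrix n m R} {d : m → R} (hAC : A * C = diagonal d) (hd : ∀ i, IsRightRegular (d i)) :
    LinearIndependent R A.row := by
  have := Fintype.ofFinite m
  rw [← vecMul_injective_iff]
  refine Function.Injective.of_comp (f := fun x => x ᵥ* C) ?_
  simpa only [Function.comp_def, vecMul_vecMul, hAC] using vecMul_diagonal_injective hd

end RowIndependence

section Laplacian

variable {R V : Type*} [Fintype V] [DecidableEq V] (G : SimpleGraph V) [DecidableRel G.Adj]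

theorem lapMatrix_apply_self [AddGroupWithOne R] (v : V) :
    G.lapMatrix R v v = G.degree v := by
  simp [SimpleGraph.lapMatrix, SimpleGraph.degMatrix]

variable {G}

theorem lapMatrix_apply_of_ne_of_not_adj [AddGroupWithOne R] {u v : V} (hne : u ≠ v)
    (hadj : ¬ G.Adj u v) : G.lapMatrix R u v = 0 := by
  simp [SimpleGraph.lapMatrix, SimpleGraph.degMatrix, hne, hadj]

theorem lapMatrix_submatrix_eq_diagonal_of_isIndepSet [AddGroupWithOne R] {S : Set V}
    (hS : G.IsIndepSet S) :
    (G.lapMatrix R).submatrix ((↑) : S → V) (↑) = diagonal fun v : S => (G.degree v : R) := by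
  ext u v
  obtain rfl | hne := eq_or_ne u v
  · rw [submatrix_apply, lapMatrix_apply_self, diagonal_apply_eq]
  · have hne' : (u : V) ≠ v := Subtype.coe_ne_coe.mpr hne
    rw [submatrix_apply, diagonal_apply_ne _ hne,
      lapMatrix_apply_of_ne_of_not_adj hne' (hS u.2 v.2 hne')]

theorem columns_linearIndependent_of_transpose_mul_self_eq_lapMatrix_general {ι : Type*} [Ring R]
    [Fintype ι] {B : Matrix ι V R} (hB : Bᵀ * B = G.lapMatrix R) {S : Set V}
    (hS : G.IsIndepSet S) (hdeg : ∀ v ∈ S, IsRightRegular (G.degree v : R)) :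
    LinearIndependent R (fun v : S => Bᵀ (v : V)) := by
  have hgram : Bᵀ.submatrix ((↑) : S → V) id * B.submatrix id ((↑) : S → V) =
      diagonal fun v : S => (G.degree v : R) := by
    rw [← submatrix_mul _ _ _ _ _ Function.bijective_id, hB,
      lapMatrix_submatrix_eq_diagonal_of_isIndepSet hS]
  exact linearIndependent_row_of_mul_eq_diagonal hgram fun v => hdeg v v.2

end Laplacian

/-- Let `B` be any real matrix whose columns are indexed by the
vertices of a finite simple graph `G` and which satisfies `Bᵀ B = L(G)`, and let
`S` be an independent set of vertices of `G`, each having at least one neighbor.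
Then the columns of `B` indexed by the vertices in `S` are linearly independent
(equivalently, the corresponding submatrix of `B` has full column rank). -/
theorem columns_linearIndependent_of_transpose_mul_self_eq_lapMatrix
    {V ι : Type*} [Fintype V] [DecidableEq V] [Fintype ι]
    (G : SimpleGraph V) [DecidableRel G.Adj]
    (B : Matrix ι V ℝ) (hB : Bᵀ * B = G.lapMatrix ℝ)
    (S : Finset V) (hS : ∀ u ∈ S, ∀ v ∈ S, ¬ G.Adj u v)
    (hdeg : ∀ v ∈ S, 0 < G.degree v) :
    LinearIndependent ℝ (fun v : S => Bᵀ (v : V)) :=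
  columns_linearIndependent_of_transpose_mul_self_eq_lapMatrix_general hB
    (S := (S : Set V)) (fun u hu v hv _ => hS u hu v hv) fun v hv =>
      (IsRegular.of_ne_zero (Nat.cast_ne_zero.mpr (hdeg v hv).ne')).right
end

section
/- Let H be a finite simple graph equipped with an orientation and oriented incidence matrix M, let S be an independent set of vertices of H, let λ be a real vector indexed by the edges of H, let ρ ∈ ℝ, and let x, z be real vectors indexed by the vertices of H with x_v = 0 for all v ∉ S and z_v = 0 for all v ∈ S. Then λᵀM(x + z) + (ρ/2)‖M(x + z)‖² = Σ_{v∈S} [ (Σ_{e : v is an endpoint of e} σ(e,v) λ_e − ρ Σ_{u adjacent to v} z_u) · x_v + (ρ/2) deg(v) · x_v² ] + λᵀMz + (ρ/2)‖Mz‖², where σ(e,v) = 1 if v = head(e) and σ(e,v) = −1 if v = tail(e). In particular, as a function of the values (x_v)_{v∈S}, the left-hand side separates into a sum over v ∈ S of independent one-variable terms plus a quantity not depending on x; Lemma 1 of the paper follows by applying this identity to each induced subgraph G_l with S the first color class. -/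
open Matrix

/-!
The Gram matrix `Mᵀ * M` of the oriented incidence matrix is the graph Laplacian `L`, whatever the
orientation, so `‖M (x + z)‖² = xᵀ L x + 2 xᵀ L z + zᵀ L z`. Since `L` is the degree matrix minus
the adjacency matrix, `xᵀ L x` has no mixed terms when `x` is supported on an independent set, and
`xᵀ L z` sees only the adjacency part when `x` and `z` have disjoint supports.
-/

theorem dotProduct_eq_sum_of_eq_zero_of_notMem {n R : Type*} [Fintype n]
    [NonUnitalNonAssocSemiring R] {S : Finset n} {x : n → R} (hx : ∀ i, i ∉ S → x i = 0)
    (y : n → R) :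
    x ⬝ᵥ y = ∑ i ∈ S, x i * y i :=
  (Finset.sum_subset S.subset_univ fun i _ hi => by rw [hx i hi, zero_mul]).symm

theorem dotProduct_mulVec_add_self_of_isSymm {n R : Type*} [Fintype n] [CommSemiring R]
    {A : Matrix n n R} (hA : A.IsSymm) (x z : n → R) :
    (x + z) ⬝ᵥ A *ᵥ (x + z) = x ⬝ᵥ A *ᵥ x + 2 * (x ⬝ᵥ A *ᵥ z) + z ⬝ᵥ A *ᵥ z := by
  have cross_comm : z ⬝ᵥ A *ᵥ x = x ⬝ᵥ A *ᵥ z := by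
    rw [dotProduct_mulVec, ← mulVec_transpose, hA.eq, dotProduct_comm]
  rw [mulVec_add, add_dotProduct, dotProduct_add, dotProduct_add, cross_comm]
  ring

theorem sum_sq_mulVec {m n R : Type*} [Fintype m] [Fintype n] [CommSemiring R]
    (M : Matrix m n R) (y : n → R) :
    ∑ i, (M *ᵥ y) i ^ 2 = y ⬝ᵥ (Mᵀ * M) *ᵥ y := by
  rw [← mulVec_mulVec, dotProduct_mulVec, vecMul_transpose]
  simp only [dotProduct, sq]

section OrientedIncMatrix

variable {E V : Type*} [DecidableEq V]

/-- The oriented incidence matrix of a family of edges indexed by `E`, the edge `e` pointing from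
`tail e` to `head e`; it sends a vertex vector to its differences along the edges. A loop gets the
entry `1` at its only endpoint. -/
def orientedIncMatrix (R : Type*) [NonAssocRing R] (head tail : E → V) : Matrix E V R :=
  Matrix.of fun e v => if v = head e then 1 else if v = tail e then -1 else 0

variable {R : Type*} [NonAssocRing R] {head tail : E → V}

theorem orientedIncMatrix_apply (e : E) (v : V) :
    orientedIncMatrix R head tail e v =
      if v = head e then 1 else if v = tail e then -1 else 0 :=
  rfl

theorem orientedIncMatrix_apply_mul_self (e : E) (v : V) :
    orientedIncMatrix R head tail e v * orientedIncMatrix R head tail e v =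
      if v ∈ s(head e, tail e) then 1 else 0 := by
  simp only [orientedIncMatrix_apply, Sym2.mem_iff]
  split_ifs <;> simp_all

theorem orientedIncMatrix_apply_mul_apply_of_ne (e : E) {u v : V} (huv : u ≠ v) :
    orientedIncMatrix R head tail e u * orientedIncMatrix R head tail e v =
      if s(head e, tail e) = s(u, v) then -1 else 0 := by
  simp only [orientedIncMatrix_apply, Sym2.eq_iff]
  grind [mul_one, one_mul, mul_zero, zero_mul]

end OrientedIncMatrix

section EdgeSums

variable {V : Type*} [Fintype V] [DecidableEq V] (H : SimpleGraph V) [DecidableRel H.Adj]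

theorem sum_edgeSet_ite_mem {R : Type*} [AddCommMonoidWithOne R] (v : V) :
    ∑ e : H.edgeSet, (if v ∈ (e : Sym2 V) then (1 : R) else 0) = H.degree v := by
  rw [← Finset.sum_subtype H.edgeFinset (fun _ => H.mem_edgeFinset)
      (fun e => if v ∈ e then (1 : R) else 0), Finset.sum_boole, ← H.incidenceFinset_eq_filter,
    H.card_incidenceFinset_eq_degree]

theorem sum_edgeSet_ite_eq {R : Type*} [AddCommMonoid R] (u v : V) (r : R) :
    ∑ e : H.edgeSet, (if (e : Sym2 V) = s(u, v) then r else 0) = if H.Adj u v then r else 0 := by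
  rw [← Finset.sum_subtype H.edgeFinset (fun _ => H.mem_edgeFinset)
      (fun e => if e = s(u, v) then r else 0), Finset.sum_ite_eq']
  simp only [H.mem_edgeFinset, H.mem_edgeSet]

theorem orientedIncMatrix_transpose_mul_self {R : Type*} [NonAssocRing R]
    {head tail : H.edgeSet → V} (horient : ∀ e : H.edgeSet, (e : Sym2 V) = s(head e, tail e)) :
    (orientedIncMatrix R head tail)ᵀ * orientedIncMatrix R head tail = H.lapMatrix R := by
  ext u v
  rw [SimpleGraph.lapMatrix, SimpleGraph.degMatrix, Matrix.sub_apply,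
    SimpleGraph.adjMatrix_apply, Matrix.mul_apply]
  simp only [transpose_apply]
  rcases eq_or_ne u v with rfl | huv
  · simp only [orientedIncMatrix_apply_mul_self, ← horient, sum_edgeSet_ite_mem, diagonal_apply_eq,
      H.irrefl, if_false, sub_zero]
  · simp only [orientedIncMatrix_apply_mul_apply_of_ne _ huv, ← horient, sum_edgeSet_ite_eq,
      diagonal_apply_ne _ huv, zero_sub, neg_ite, neg_zero]

end EdgeSums

section Laplacian

variable {V R : Type*} [Fintype V] [DecidableEq V] [CommRing R] {H : SimpleGraph V}
  [DecidableRel H.Adj] {S : Finset V} {x z : V → R}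

theorem dotProduct_lapMatrix_mulVec_self_of_isIndepSet (hS : H.IsIndepSet S)
    (hx : ∀ v, v ∉ S → x v = 0) :
    x ⬝ᵥ H.lapMatrix R *ᵥ x = ∑ v ∈ S, H.degree v * x v ^ 2 := by
  rw [dotProduct_eq_sum_of_eq_zero_of_notMem hx]
  refine Finset.sum_congr rfl fun v hv => ?_
  have neighbor_sum_eq_zero : ∑ u ∈ H.neighborFinset v, x u = 0 :=
    Finset.sum_eq_zero fun u hu => hx u fun huS =>
      have hadj : H.Adj v u := (H.mem_neighborFinset v u).mp hu
      hS hv huS hadj.ne hadj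
  rw [SimpleGraph.lapMatrix_mulVec_apply, neighbor_sum_eq_zero]
  ring

theorem dotProduct_lapMatrix_mulVec_of_disjoint_support (hx : ∀ v, v ∉ S → x v = 0)
    (hz : ∀ v ∈ S, z v = 0) :
    x ⬝ᵥ H.lapMatrix R *ᵥ z = -∑ v ∈ S, (∑ u ∈ H.neighborFinset v, z u) * x v := by
  rw [dotProduct_eq_sum_of_eq_zero_of_notMem hx, ← Finset.sum_neg_distrib]
  refine Finset.sum_congr rfl fun v hv => ?_
  rw [SimpleGraph.lapMatrix_mulVec_apply, hz v hv]
  ring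

end Laplacian

theorem sum_sq_orientedIncMatrix_mulVec_add
    {V R : Type*} [Fintype V] [DecidableEq V] [CommRing R]
    {H : SimpleGraph V} [DecidableRel H.Adj] {head tail : H.edgeSet → V}
    (horient : ∀ e : H.edgeSet, (e : Sym2 V) = s(head e, tail e))
    {S : Finset V} (hS : H.IsIndepSet S)
    {x z : V → R} (hx : ∀ v, v ∉ S → x v = 0) (hz : ∀ v ∈ S, z v = 0) :
    ∑ e, (orientedIncMatrix R head tail *ᵥ (x + z)) e ^ 2 =
      ∑ v ∈ S, (H.degree v * x v ^ 2 - 2 * (∑ u ∈ H.neighborFinset v, z u) * x v) +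
        ∑ e, (orientedIncMatrix R head tail *ᵥ z) e ^ 2 := by
  simp only [sum_sq_mulVec, orientedIncMatrix_transpose_mul_self H horient]
  rw [dotProduct_mulVec_add_self_of_isSymm (H.isSymm_lapMatrix R),
    dotProduct_lapMatrix_mulVec_self_of_isIndepSet hS hx,
    dotProduct_lapMatrix_mulVec_of_disjoint_support hx hz]
  simp only [Finset.sum_sub_distrib, mul_assoc, ← Finset.mul_sum]
  ring

/-- `κ` is half of the penalty parameter `ρ`, so that no division by `2` is needed in `R`. -/
theorem augLagrangian_separates_over_indepSet_general
    {V R : Type*} [Fintype V] [DecidableEq V] [CommRing R]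
    {H : SimpleGraph V} [DecidableRel H.Adj] {head tail : H.edgeSet → V}
    (horient : ∀ e : H.edgeSet, (e : Sym2 V) = s(head e, tail e))
    {S : Finset V} (hS : H.IsIndepSet S) (lam : H.edgeSet → R) (κ : R)
    {x z : V → R} (hx : ∀ v, v ∉ S → x v = 0) (hz : ∀ v ∈ S, z v = 0) :
    lam ⬝ᵥ orientedIncMatrix R head tail *ᵥ (x + z)
        + κ * ∑ e, (orientedIncMatrix R head tail *ᵥ (x + z)) e ^ 2
      = (∑ v ∈ S,
          ((∑ e, orientedIncMatrix R head tail e v * lam e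
            - 2 * κ * ∑ u ∈ H.neighborFinset v, z u) * x v
            + κ * H.degree v * x v ^ 2))
        + lam ⬝ᵥ orientedIncMatrix R head tail *ᵥ z
        + κ * ∑ e, (orientedIncMatrix R head tail *ᵥ z) e ^ 2 := by
  set M := orientedIncMatrix R head tail
  have linear_term : lam ⬝ᵥ M *ᵥ x = ∑ v ∈ S, (∑ e, M e v * lam e) * x v := by
    rw [dotProduct_mulVec, dotProduct_comm, dotProduct_eq_sum_of_eq_zero_of_notMem hx]
    simp only [vecMul, dotProduct, mul_comm]
  have collect_terms : ∑ v ∈ S, ((∑ e, M e v * lam e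
      - 2 * κ * ∑ u ∈ H.neighborFinset v, z u) * x v + κ * H.degree v * x v ^ 2) =
      lam ⬝ᵥ M *ᵥ x +
        κ * ∑ v ∈ S, (H.degree v * x v ^ 2 - 2 * (∑ u ∈ H.neighborFinset v, z u) * x v) := by
    rw [linear_term, Finset.mul_sum, ← Finset.sum_add_distrib]
    exact Finset.sum_congr rfl fun v _ => by ring
  rw [collect_terms, sum_sq_orientedIncMatrix_mulVec_add horient hS hx hz, mulVec_add,
    dotProduct_add]
  ring

/-- Let `H` be a finite simple graph with an orientation
`(head, tail)` and oriented incidence matrix `M`, let `S` be an independent set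
of vertices of `H`, let `λ` be a real vector indexed by the edges, `ρ ∈ ℝ`, and
let `x, z` be vectors indexed by the vertices with `x` supported on `S` and `z`
vanishing on `S`.  Then, with `σ(e,v) = 1` if `v = head e`, `= -1` if
`v = tail e`, and `= 0` if `v` is not an endpoint of `e`,

`λᵀM(x+z) + (ρ/2)‖M(x+z)‖²
  = Σ_{v∈S} [ (Σ_e σ(e,v) λ_e − ρ Σ_{u ~ v} z_u)·x_v + (ρ/2)·deg(v)·x_v² ]
      + λᵀMz + (ρ/2)‖Mz‖²`,

so that, as a function of `(x_v)_{v∈S}`, the left-hand side separates into a sum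
of independent one-variable terms plus a quantity not depending on `x`. -/
theorem augLagrangian_separates_over_indepSet
    {V : Type*} [Fintype V] [DecidableEq V]
    (H : SimpleGraph V) [DecidableRel H.Adj]
    (head tail : H.edgeSet → V)
    (horient : ∀ e : H.edgeSet, (e : Sym2 V) = s(head e, tail e))
    (M : Matrix H.edgeSet V ℝ)
    (hM : ∀ (e : H.edgeSet) (v : V),
      M e v = if v = head e then 1 else if v = tail e then -1 else 0)
    (S : Finset V) (hS : ∀ u ∈ S, ∀ v ∈ S, ¬ H.Adj u v)
    (lam : H.edgeSet → ℝ) (ρ : ℝ)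
    (x z : V → ℝ) (hx : ∀ v, v ∉ S → x v = 0) (hz : ∀ v ∈ S, z v = 0) :
    lam ⬝ᵥ M.mulVec (x + z) + (ρ / 2) * ∑ e, (M.mulVec (x + z) e) ^ 2
      = (∑ v ∈ S,
          (((∑ e : H.edgeSet,
              (if v = head e then (1 : ℝ) else if v = tail e then -1 else 0) * lam e)
            - ρ * ∑ u ∈ H.neighborFinset v, z u) * x v
            + (ρ / 2) * (H.degree v : ℝ) * x v ^ 2))
        + lam ⬝ᵥ M.mulVec z + (ρ / 2) * ∑ e, (M.mulVec z e) ^ 2 := by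
  obtain rfl : M = orientedIncMatrix ℝ head tail := Matrix.ext hM
  simpa only [orientedIncMatrix_apply, mul_div_cancel₀ ρ (two_ne_zero' ℝ)] using
    augLagrangian_separates_over_indepSet_general horient
      (fun u hu v hv _ => hS u hu v hv) lam (ρ / 2) hx hz
end

section
/- Assume that for each l ∈ {1,…,n} there is a vertex set V_l' with V_l ⊆ V_l' ⊆ V and an edge set E_l' ⊆ E whose edges have both endpoints in V_l', such that the graph (V_l', E_l ∪ E_l') is connected (for instance, V_l' and E_l' obtained by adjoining a Steiner tree of G whose required nodes are V_l). Then: (i) a family z = (z^{(p)})_{p∈V} of vectors in ℝⁿ satisfies z_l^{(i)} = z_l^{(j)} for every l and every edge (i,j) ∈ E_l ∪ E_l' if and only if there exists x ∈ ℝⁿ such that z_l^{(p)} = x_l for every l and every p ∈ V_l'; (ii) consequently, the infimum of Σ_{p=1}^P F_p(x) over x ∈ ℝⁿ equals the infimum of Σ_{p=1}^P F_p(z^{(p)}) over all families z satisfying the edge constraints in (i). (This is the equivalence of problems (2) and (12) of the paper for a non-connected variable after Steiner-tree augmentation.) -/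
noncomputable section

/-- For a component `l`, the graph on all nodes whose edge set is
`E_l ∪ E_l'`: the edges of `G` joining two nodes that both depend on
component `l`, together with the augmenting (Steiner) edges given by `H l`. -/
def augmentedGraph {P n : ℕ} (G : SimpleGraph (Fin P)) (S : Fin P → Finset (Fin n))
    (H : Fin n → SimpleGraph (Fin P)) (l : Fin n) : SimpleGraph (Fin P) where
  Adj i j := (G.Adj i j ∧ l ∈ S i ∧ l ∈ S j) ∨ (H l).Adj i j
  symm := by
    refine ⟨?_⟩
    intro i j hij
    rcases hij with ⟨h1, h2, h3⟩ | h
    · exact Or.inl ⟨h1.symm, h3, h2⟩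
    · exact Or.inr h.symm
  loopless := by
    refine ⟨?_⟩
    intro i hi
    rcases hi with ⟨h1, _⟩ | h
    · exact G.loopless.irrefl i h1
    · exact (H l).loopless.irrefl i h

theorem eq_of_reachable {V α : Type*} {K : SimpleGraph V} {f : V → α}
    (hf : ∀ i j, K.Adj i j → f i = f j) {u v : V} (huv : K.Reachable u v) : f u = f v := by
  obtain ⟨walk⟩ := huv
  induction walk with
  | nil => rfl
  | cons hadj _ ih => exact (hf _ _ hadj).trans ih

theorem forall_adj_eq_iff_exists_forall_mem_eq {V α : Type*} {K : SimpleGraph V} {W : Set V}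
    (hsupp : K.support ⊆ W) (hconn : (K.induce W).Connected) (f : V → α) :
    (∀ i j, K.Adj i j → f i = f j) ↔ ∃ c, ∀ p ∈ W, f p = c := by
  constructor
  · intro hf
    obtain ⟨root⟩ := hconn.nonempty
    exact ⟨f root, fun p hp ↦
      eq_of_reachable (f := fun q : W ↦ f q) (fun i j hij ↦ hf i j hij)
        (hconn.preconnected ⟨p, hp⟩ root)⟩
  · rintro ⟨c, hc⟩ i j hij
    exact (hc i (hsupp ⟨j, hij⟩)).trans (hc j (hsupp ⟨i, hij.symm⟩)).symm

section Consensus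

variable {V ι β : Type*} {α : ι → Type*} {K : ι → SimpleGraph V} {W : ι → Set V}

/-- The edge constraints of the distributed problem: each node `p` holds a full copy `z p` of the
variable, and the copies of component `l` agree across every edge of `K l`. -/
def IsEdgeConsensus (K : ι → SimpleGraph V) (z : V → ∀ l, α l) : Prop :=
  ∀ l i j, (K l).Adj i j → z i l = z j l

theorem isEdgeConsensus_iff_exists_forall_mem_eq (hsupp : ∀ l, (K l).support ⊆ W l)
    (hconn : ∀ l, ((K l).induce (W l)).Connected) (z : V → ∀ l, α l) :
    IsEdgeConsensus K z ↔ ∃ x : ∀ l, α l, ∀ l, ∀ p ∈ W l, z p l = x l := by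
  rw [← Classical.skolem (p := fun l c ↦ ∀ p ∈ W l, z p l = c)]
  exact forall_congr' fun l ↦
    forall_adj_eq_iff_exists_forall_mem_eq (hsupp l) (hconn l) fun p ↦ z p l

theorem range_sum_eq_range_sum_isEdgeConsensus [Fintype V] [AddCommMonoid β]
    (hsupp : ∀ l, (K l).support ⊆ W l) (hconn : ∀ l, ((K l).induce (W l)).Connected)
    {S : V → Set ι} (hSW : ∀ l, {p | l ∈ S p} ⊆ W l)
    {F : V → (∀ l, α l) → β} (hF : ∀ p, DependsOn (F p) (S p)) :
    Set.range (fun x ↦ ∑ p, F p x) =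
      Set.range fun z : {z : V → ∀ l, α l // IsEdgeConsensus K z} ↦ ∑ p, F p (z.val p) := by
  apply Set.Subset.antisymm
  · rintro _ ⟨x, rfl⟩
    exact ⟨⟨fun _ ↦ x, fun _ _ _ _ ↦ rfl⟩, rfl⟩
  · rintro _ ⟨⟨z, hz⟩, rfl⟩
    obtain ⟨x, hx⟩ := (isEdgeConsensus_iff_exists_forall_mem_eq hsupp hconn z).mp hz
    have hFz (p : V) : F p x = F p (z p) := hF p fun l hl ↦ (hx l p (hSW l hl)).symm
    exact ⟨x, Finset.sum_congr rfl fun p _ ↦ hFz p⟩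

/-- The infima agree because the two problems attain exactly the same objective values. -/
theorem consensus_reformulation_nonconnected_general [Fintype V] [AddCommMonoid β] [InfSet β]
    (hsupp : ∀ l, (K l).support ⊆ W l) (hconn : ∀ l, ((K l).induce (W l)).Connected)
    {S : V → Set ι} (hSW : ∀ l, {p | l ∈ S p} ⊆ W l)
    {F : V → (∀ l, α l) → β} (hF : ∀ p, DependsOn (F p) (S p)) :
    (∀ z : V → ∀ l, α l,
      IsEdgeConsensus K z ↔ ∃ x : ∀ l, α l, ∀ l, ∀ p ∈ W l, z p l = x l) ∧
    ⨅ x, ∑ p, F p x =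
      ⨅ z : {z : V → ∀ l, α l // IsEdgeConsensus K z}, ∑ p, F p (z.val p) :=
  ⟨isEdgeConsensus_iff_exists_forall_mem_eq hsupp hconn,
    congrArg sInf (range_sum_eq_range_sum_isEdgeConsensus hsupp hconn hSW hF)⟩

end Consensus

theorem support_augmentedGraph_subset {P n : ℕ} (G : SimpleGraph (Fin P))
    {S : Fin P → Finset (Fin n)} {H : Fin n → SimpleGraph (Fin P)} {l : Fin n}
    {W : Set (Fin P)} (hSW : {p | l ∈ S p} ⊆ W) (hHW : (H l).support ⊆ W) :
    (augmentedGraph G S H l).support ⊆ W := by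
  rintro i ⟨j, ⟨-, hi, -⟩ | hij⟩
  · exact hSW hi
  · exact hHW ⟨j, hij⟩

/-- **equivalence of problems (2) and (12) after Steiner-tree
augmentation.**  Suppose that for each component `l` there are a vertex set
`V' l ⊇ V_l = {p : l ∈ S p}` and extra edges (the graph `H l`, a subgraph of
the communication graph `G` whose edges have both endpoints in `V' l`) such
that the graph with vertex set `V' l` and edge set `E_l ∪ E_l'` is connected.
Then (i) a family of local copies `z` satisfies the augmented edge consensus
constraints iff all copies of each component `l` agree with some global
`x ∈ ℝⁿ` on `V' l`, and (ii) the infimum of `Σ_p F p x` over `x ∈ ℝⁿ` equals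
the infimum of `Σ_p F p (z p)` over the families `z` satisfying those
constraints. -/
theorem consensus_reformulation_nonconnected
    {P n : ℕ} (G : SimpleGraph (Fin P)) [DecidableRel G.Adj]
    (hG : G.Connected)
    (S : Fin P → Finset (Fin n))
    (F : Fin P → (Fin n → ℝ) → EReal)
    (hdep : ∀ p, ∀ x y : Fin n → ℝ, (∀ l ∈ S p, x l = y l) → F p x = F p y)
    (hne : ∀ l : Fin n, ∃ p, l ∈ S p)
    (V' : Fin n → Set (Fin P))
    (hsub : ∀ l : Fin n, {p | l ∈ S p} ⊆ V' l)
    (H : Fin n → SimpleGraph (Fin P))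
    (hHsub : ∀ l, H l ≤ G)
    (hHend : ∀ (l : Fin n) (i j : Fin P), (H l).Adj i j → i ∈ V' l ∧ j ∈ V' l)
    (hconn : ∀ l : Fin n, ((augmentedGraph G S H l).induce (V' l)).Connected) :
    (∀ z : Fin P → Fin n → ℝ,
      ((∀ (l : Fin n) (i j : Fin P), (augmentedGraph G S H l).Adj i j → z i l = z j l)
        ↔ (∃ x : Fin n → ℝ, ∀ (l : Fin n) (p : Fin P), p ∈ V' l → z p l = x l)))
    ∧ (⨅ x : Fin n → ℝ, ∑ p, F p x)
        = ⨅ z : {z : Fin P → Fin n → ℝ //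
            ∀ (l : Fin n) (i j : Fin P), (augmentedGraph G S H l).Adj i j → z i l = z j l},
            ∑ p, F p (z.val p) :=
  consensus_reformulation_nonconnected_general (S := fun p ↦ S p)
    (fun l ↦ support_augmentedGraph_subset G (hsub l) fun i ⟨j, hij⟩ ↦ (hHend l i j hij).1)
    hconn hsub hdep
end
end
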